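/- arXiv:1205.6727 — 2 statements merged into one kernel-verified Lean document; each statement's English description precedes it below -/
import Mathlib

section
/- Let $n \ge 1$ and let $A$ be an $n\times n$ real matrix with nonnegative entries such that every row and every column of $A$ contains a positive entry. Define $f : \mathbb{R}^n \to \mathbb{R}^n$ by $$f_i(x) = \tfrac12\Big(\log\Big(\sum_{j=1}^n A_{ji} e^{x_j}\Big) - \log\Big(\sum_{j=1}^n A_{ij} e^{-x_j}\Big)\Big), \qquad 1 \le i \le n.$$ Let $p \in \mathbb{R}^n$. Then $f(p) = p$ if and only if the pair $(p, \mu)$ with $\mu = -\log\big(\sum_{i,j=1}^n A_{ij} e^{p_i - p_j}\big)$ is a global minimizer of the dual function $\theta(q, \nu) = \sum_{i,j=1}^n A_{ij} e^{q_i - q_j + \nu} - \nu$ over $\mathbb{R}^n \times \mathbb{R}$. Moreover, in that case the matrix $\rho$ defined by $\rho_{ij} = e^{\mu} e^{p_i} A_{ij} e^{-p_j}$ is a global maximizer of the entropy objective $-\sum_{(i,j):\, A_{ij}>0} \rho_{ij}\big(\log(\rho_{ij}/A_{ij}) - 1\big)$ over the set of matrices $\rho \in \mathbb{R}^{n\times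 n}$ with $\rho_{ij} \ge 0$, $\rho_{ij} = 0$ whenever $A_{ij} = 0$, $\sum_{j} \rho_{ij} = \sum_{j} \rho_{ji}$ for every $i$, and $\sum_{i,j} \rho_{ij} = 1$ (with the convention $0\cdot\log 0 = 0$). -/
/-- The ideal HOTS map. -/
noncomputable def hotsMap {n : ℕ} (A : Matrix (Fin n) (Fin n) ℝ) (x : Fin n → ℝ) : Fin n → ℝ :=
  fun i => (1 / 2) * (Real.log (∑ j, A j i * Real.exp (x j))
    - Real.log (∑ j, A i j * Real.exp (-(x j))))

/-- The dual function `θ(q, ν) = Σ_{i,j} A_{ij} e^{q_i − q_j + ν} − ν`. -/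
noncomputable def dualTheta {n : ℕ} (A : Matrix (Fin n) (Fin n) ℝ) (q : Fin n → ℝ) (ν : ℝ) : ℝ :=
  (∑ i, ∑ j, A i j * Real.exp (q i - q j + ν)) - ν

/-- The feasible set of the entropy maximization problem: nonnegative flows
supported on the pattern of `A`, balanced at every node, of total mass 1. -/
def FeasibleCirculation {n : ℕ} (A ρ : Matrix (Fin n) (Fin n) ℝ) : Prop :=
  (∀ i j, 0 ≤ ρ i j) ∧ (∀ i j, A i j = 0 → ρ i j = 0) ∧
  (∀ i, ∑ j, ρ i j = ∑ j, ρ j i) ∧ (∑ i, ∑ j, ρ i j = 1)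

/-- The entropy objective `−Σ_{(i,j): A_{ij}>0} ρ_{ij}(log(ρ_{ij}/A_{ij}) − 1)`
(with the convention `0 log 0 = 0`, which holds automatically since `Real.log 0 = 0`). -/
noncomputable def entropyObj {n : ℕ} (A ρ : Matrix (Fin n) (Fin n) ℝ) : ℝ :=
  -∑ i, ∑ j, if 0 < A i j then ρ i j * (Real.log (ρ i j / A i j) - 1) else 0

/-- Pairing a balanced matrix with a potential difference plus a constant only sees the
constant. -/
lemma sum_balanced_mul_potential {n : ℕ} {ρ : Matrix (Fin n) (Fin n) ℝ}
    (hbal : ∀ i, ∑ j, ρ i j = ∑ j, ρ j i) (d : Fin n → ℝ) (t : ℝ) :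
    ∑ i, ∑ j, ρ i j * (d i - d j + t) = (∑ i, ∑ j, ρ i j) * t := by
  have h1 : ∑ i, ∑ j, ρ i j * d i = ∑ i, ∑ j, ρ i j * d j := by
    rw [Finset.sum_comm (f := fun i j => ρ i j * d j)]
    refine Finset.sum_congr rfl fun i _ => ?_
    rw [← Finset.sum_mul, ← Finset.sum_mul, hbal i]
  simp only [mul_add, mul_sub, Finset.sum_add_distrib, Finset.sum_sub_distrib, h1, sub_self,
    zero_add, Finset.sum_mul]

/-- Fixed points of the HOTS map are the potentials whose scaled matrix is balanced. -/
lemma hotsMap_eq_self_iff_balanced {n : ℕ} {A : Matrix (Fin n) (Fin n) ℝ}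
    (hA : ∀ i j, 0 ≤ A i j) (hrow : ∀ i, ∃ j, 0 < A i j) (hcol : ∀ j, ∃ i, 0 < A i j)
    (p : Fin n → ℝ) :
    hotsMap A p = p ↔
      ∀ i, ∑ j, A i j * Real.exp (p i - p j) = ∑ j, A j i * Real.exp (p j - p i) := by
  rw [funext_iff]
  refine forall_congr' fun i => ?_
  have hC : 0 < ∑ j, A j i * Real.exp (p j) := by
    obtain ⟨k, hk⟩ := hcol i
    exact Finset.sum_pos' (fun j _ => mul_nonneg (hA j i) (Real.exp_pos _).le)
      ⟨k, Finset.mem_univ k, mul_pos hk (Real.exp_pos _)⟩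
  have hR : 0 < ∑ j, A i j * Real.exp (-(p j)) := by
    obtain ⟨k, hk⟩ := hrow i
    exact Finset.sum_pos' (fun j _ => mul_nonneg (hA i j) (Real.exp_pos _).le)
      ⟨k, Finset.mem_univ k, mul_pos hk (Real.exp_pos _)⟩
  have hout : ∑ j, A i j * Real.exp (p i - p j)
      = Real.exp (p i) * ∑ j, A i j * Real.exp (-(p j)) := by
    rw [Finset.mul_sum]
    refine Finset.sum_congr rfl fun j _ => ?_
    rw [sub_eq_add_neg, Real.exp_add]; ring
  have hin : ∑ j, A j i * Real.exp (p j - p i)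
      = Real.exp (-(p i)) * ∑ j, A j i * Real.exp (p j) := by
    rw [Finset.mul_sum]
    refine Finset.sum_congr rfl fun j _ => ?_
    rw [sub_eq_add_neg, Real.exp_add]; ring
  rw [hout, hin]
  have hlog := Real.log_injOn_pos.eq_iff
    (Set.mem_Ioi.2 (mul_pos (Real.exp_pos (p i)) hR))
    (Set.mem_Ioi.2 (mul_pos (Real.exp_pos (-(p i))) hC))
  rw [← hlog, Real.log_mul (Real.exp_pos _).ne' hR.ne', Real.log_mul (Real.exp_pos _).ne' hC.ne',
    Real.log_exp, Real.log_exp, hotsMap]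
  constructor <;> intro h <;> linarith

/-- The scaled matrix at a balanced potential is a feasible circulation, once normalized. -/
lemma feasibleCirculation_scaled {n : ℕ} {A : Matrix (Fin n) (Fin n) ℝ}
    (hA : ∀ i j, 0 ≤ A i j) {p : Fin n → ℝ} {μ : ℝ}
    (hbal : ∀ i, ∑ j, A i j * Real.exp (p i - p j) = ∑ j, A j i * Real.exp (p j - p i))
    (hmass : ∑ i, ∑ j, A i j * Real.exp (p i - p j + μ) = 1) :
    FeasibleCirculation A (fun i j => A i j * Real.exp (p i - p j + μ)) := by
  refine ⟨fun i j => mul_nonneg (hA i j) (Real.exp_pos _).le,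
    fun i j h => by simp [h], fun i => ?_, hmass⟩
  simp only [Real.exp_add, ← mul_assoc, ← Finset.sum_mul, hbal i]

/-- A feasible scaled matrix certifies that its potential minimizes the dual function. -/
lemma dualTheta_le_of_feasible {n : ℕ} {A : Matrix (Fin n) (Fin n) ℝ}
    (hA : ∀ i j, 0 ≤ A i j) {p : Fin n → ℝ} {μ : ℝ}
    (hfeas : FeasibleCirculation A (fun i j => A i j * Real.exp (p i - p j + μ)))
    (q : Fin n → ℝ) (ν : ℝ) : dualTheta A p μ ≤ dualTheta A q ν := by
  obtain ⟨-, -, hbal, hmass⟩ := hfeas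
  have hpot := sum_balanced_mul_potential hbal (fun i => q i - p i) (ν - μ + 1)
  have hle : ∑ i, ∑ j, A i j * Real.exp (p i - p j + μ) *
        ((q i - p i) - (q j - p j) + (ν - μ + 1))
      ≤ ∑ i, ∑ j, A i j * Real.exp (q i - q j + ν) := by
    refine Finset.sum_le_sum fun i _ => Finset.sum_le_sum fun j _ => ?_
    have hexp : Real.exp (q i - q j + ν) = Real.exp (p i - p j + μ) *
        Real.exp ((q i - p i) - (q j - p j) + (ν - μ)) := by
      rw [← Real.exp_add]; congr 1; ring
    rw [hexp, ← mul_assoc]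
    refine mul_le_mul_of_nonneg_left ?_ (mul_nonneg (hA i j) (Real.exp_pos _).le)
    linarith [Real.add_one_le_exp ((q i - p i) - (q j - p j) + (ν - μ))]
  unfold dualTheta
  rw [hmass] at hpot ⊢
  linarith

/-- First-order optimality in the potential: a minimizer of the dual function over the
potentials is balanced. -/
lemma balanced_of_dualTheta_le {n : ℕ} {A : Matrix (Fin n) (Fin n) ℝ} {p : Fin n → ℝ} {μ : ℝ}
    (hmin : ∀ q, dualTheta A p μ ≤ dualTheta A q μ) (k : Fin n) :
    ∑ j, A k j * Real.exp (p k - p j) = ∑ j, A j k * Real.exp (p j - p k) := by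
  set e : Fin n → ℝ := Pi.single k 1 with he
  have hderiv : HasDerivAt (fun s : ℝ => dualTheta A (fun i => p i + s * e i) μ)
      (∑ i, ∑ j, A i j * (Real.exp (p i - p j + μ) * (e i - e j))) 0 := by
    unfold dualTheta
    refine HasDerivAt.sub_const _ ?_
    refine HasDerivAt.fun_sum fun i _ => HasDerivAt.fun_sum fun j _ => ?_
    have hlin (i : Fin n) : HasDerivAt (fun s : ℝ => p i + s * e i) (e i) 0 := by
      simpa using ((hasDerivAt_id (0 : ℝ)).mul_const (e i)).const_add (p i)
    simpa using ((((hlin i).sub (hlin j)).add_const μ).exp).const_mul (A i j)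
  have hloc : IsLocalMin (fun s : ℝ => dualTheta A (fun i => p i + s * e i) μ) 0 :=
    Filter.Eventually.of_forall fun s => by simpa using hmin (fun i => p i + s * e i)
  have hzero := hloc.hasDerivAt_eq_zero hderiv
  have hout : ∑ i, ∑ j, A i j * (Real.exp (p i - p j + μ) * e i)
      = Real.exp μ * ∑ j, A k j * Real.exp (p k - p j) := by
    rw [Finset.sum_eq_single k (fun i _ hi => by simp [he, hi]) (by simp), Finset.mul_sum]
    refine Finset.sum_congr rfl fun j _ => ?_
    simp only [he, Pi.single_eq_same, Real.exp_add]; ring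
  have hin : ∑ i, ∑ j, A i j * (Real.exp (p i - p j + μ) * e j)
      = Real.exp μ * ∑ j, A j k * Real.exp (p j - p k) := by
    rw [Finset.mul_sum]
    refine Finset.sum_congr rfl fun i _ => ?_
    rw [Finset.sum_eq_single k (fun j _ hj => by simp [he, hj]) (by simp)]
    simp only [he, Pi.single_eq_same, Real.exp_add]; ring
  simp only [mul_sub, Finset.sum_sub_distrib] at hzero
  rw [hout, hin, sub_eq_zero] at hzero
  exact mul_left_cancel₀ (Real.exp_pos μ).ne' hzero

/-- The Gibbs inequality in unnormalized form. -/
lemma neg_mul_log_div_sub_one_le {a x : ℝ} (ha : 0 < a) (hx : 0 ≤ x) (c : ℝ) :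
    -(x * (Real.log (x / a) - 1)) ≤ a * Real.exp c - x * c := by
  rcases hx.eq_or_lt with rfl | hx
  · simpa using (mul_pos ha (Real.exp_pos c)).le
  · have h := Real.add_one_le_exp (c - Real.log (x / a))
    rw [Real.exp_sub, Real.exp_log (div_pos hx ha)] at h
    have h2 := mul_le_mul_of_nonneg_left h hx.le
    have h3 : x * (Real.exp c / (x / a)) = a * Real.exp c := by field_simp
    linarith

/-- A feasible scaled matrix maximizes the entropy over all feasible circulations. -/
lemma entropyObj_le_of_feasible {n : ℕ} {A : Matrix (Fin n) (Fin n) ℝ}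
    (hA : ∀ i j, 0 ≤ A i j) {p : Fin n → ℝ} {μ : ℝ}
    (hfeas : FeasibleCirculation A (fun i j => A i j * Real.exp (p i - p j + μ)))
    {ρ : Matrix (Fin n) (Fin n) ℝ} (hρ : FeasibleCirculation A ρ) :
    entropyObj A ρ ≤ entropyObj A (fun i j => A i j * Real.exp (p i - p j + μ)) := by
  have hpot := sum_balanced_mul_potential hρ.2.2.1 p μ
  have hpot' := sum_balanced_mul_potential hfeas.2.2.1 p μ
  rw [hρ.2.2.2] at hpot
  rw [hfeas.2.2.2] at hpot'
  have hupper : entropyObj A ρ ≤ ∑ i, ∑ j,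
      (A i j * Real.exp (p i - p j + μ) - ρ i j * (p i - p j + μ)) := by
    simp only [entropyObj, ← Finset.sum_neg_distrib]
    refine Finset.sum_le_sum fun i _ => Finset.sum_le_sum fun j _ => ?_
    split_ifs with h
    · exact neg_mul_log_div_sub_one_le h (hρ.1 i j) _
    · have h0 : A i j = 0 := le_antisymm (not_lt.1 h) (hA i j)
      simp [h0, hρ.2.1 i j h0]
  have hvalue : entropyObj A (fun i j => A i j * Real.exp (p i - p j + μ)) = ∑ i, ∑ j,
      (A i j * Real.exp (p i - p j + μ)
        - A i j * Real.exp (p i - p j + μ) * (p i - p j + μ)) := by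
    simp only [entropyObj, ← Finset.sum_neg_distrib]
    refine Finset.sum_congr rfl fun i _ => Finset.sum_congr rfl fun j _ => ?_
    split_ifs with h
    · rw [mul_div_cancel_left₀ _ h.ne', Real.log_exp]; ring
    · have h0 : A i j = 0 := le_antisymm (not_lt.1 h) (hA i j)
      simp [h0]
  simp only [Finset.sum_sub_distrib] at hupper hvalue
  linarith

theorem hots_fixedPoint_iff_dual_minimizer {n : ℕ} (hn : 0 < n) (A : Matrix (Fin n) (Fin n) ℝ)
    (hA : ∀ i j, 0 ≤ A i j)
    (hrow : ∀ i, ∃ j, 0 < A i j) (hcol : ∀ j, ∃ i, 0 < A i j) (p : Fin n → ℝ) :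
    (hotsMap A p = p ↔
      ∀ (q : Fin n → ℝ) (ν : ℝ),
        dualTheta A p (-Real.log (∑ i, ∑ j, A i j * Real.exp (p i - p j))) ≤ dualTheta A q ν) ∧
    (hotsMap A p = p →
      FeasibleCirculation A (fun i j =>
        Real.exp (-Real.log (∑ i, ∑ j, A i j * Real.exp (p i - p j))) *
          (Real.exp (p i) * A i j * Real.exp (-(p j)))) ∧
      ∀ ρ : Matrix (Fin n) (Fin n) ℝ, FeasibleCirculation A ρ →
        entropyObj A ρ ≤ entropyObj A (fun i j =>
          Real.exp (-Real.log (∑ i, ∑ j, A i j * Real.exp (p i - p j))) *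
            (Real.exp (p i) * A i j * Real.exp (-(p j))))) := by
  have hS : 0 < ∑ i, ∑ j, A i j * Real.exp (p i - p j) := by
    have hnonneg (i j : Fin n) : 0 ≤ A i j * Real.exp (p i - p j) :=
      mul_nonneg (hA i j) (Real.exp_pos _).le
    obtain ⟨k, hk⟩ := hrow ⟨0, hn⟩
    exact Finset.sum_pos' (fun i _ => Finset.sum_nonneg fun j _ => hnonneg i j)
      ⟨⟨0, hn⟩, Finset.mem_univ _, Finset.sum_pos' (fun j _ => hnonneg _ j)
        ⟨k, Finset.mem_univ k, mul_pos hk (Real.exp_pos _)⟩⟩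
  have hmass : ∑ i, ∑ j, A i j *
      Real.exp (p i - p j + -Real.log (∑ i, ∑ j, A i j * Real.exp (p i - p j))) = 1 := by
    simp only [Real.exp_add, ← mul_assoc, ← Finset.sum_mul]
    rw [Real.exp_neg, Real.exp_log hS, mul_inv_cancel₀ hS.ne']
  generalize -Real.log (∑ i, ∑ j, A i j * Real.exp (p i - p j)) = μ at hmass ⊢
  have hscaled : (fun i j => Real.exp μ * (Real.exp (p i) * A i j * Real.exp (-(p j))))
      = fun i j => A i j * Real.exp (p i - p j + μ) := by
    funext i j
    rw [Real.exp_add, sub_eq_add_neg, Real.exp_add]; ring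
  rw [hscaled, hotsMap_eq_self_iff_balanced hA hrow hcol]
  refine ⟨⟨fun hbal => dualTheta_le_of_feasible hA (feasibleCirculation_scaled hA hbal hmass),
    fun hmin => balanced_of_dualTheta_le fun q => hmin q μ⟩, fun hbal => ?_⟩
  have hfeas := feasibleCirculation_scaled hA hbal hmass
  exact ⟨hfeas, fun ρ hρ => entropyObj_le_of_feasible hA hfeas hρ⟩
end

section
/- Let $A$ be an $n\times n$ real matrix ($n\ge 1$) with nonnegative entries, and let $L, U$ be $n\times n$ matrices with $L_{ij}\in\mathbb{R}$, $U_{ij}\in\mathbb{R}\cup\{+\infty\}$ and $0\le L_{ij}\le U_{ij}$ for all $i,j$; assume that every row and every column contains a position $(i,j)$ with $L_{ij}>0$ or with both $A_{ij}>0$ and $U_{ij}>0$ (so that the sums under the logarithms below are positive). Put $\mathrm{mid}(x,a,b)=\max(\min(x,a),b)$, define the truncation operator $T$ by $T(X)_{ij}=\mathrm{mid}(X_{ij},U_{ij},L_{ij})$, and say that a diagonal matrix $D$ with positive diagonal entries is a solution of the truncated scaling problem if $X=T(D^{-1}AD)$ satisfies $\sum_k X_{ik}=\sum_j X_{ji}$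 for all $i$; $A$ has a truncated scaling if such a $D$ exists. Consider a sequence $(p^k)_{k\ge 0}$ in $\mathbb{R}^n$ generated by exact cyclic coordinate descent from an arbitrary $p^0$: the coordinates are selected cyclically in some fixed order, and if $l$ is the coordinate selected at step $k$, then $p^{k+1}$ agrees with $p^k$ in all coordinates except $l$, and $$p_l^{k+1}=\tfrac12\log\Big(\sum_{i=1}^n \mathrm{mid}\big(A_{il}e^{p_i^k},\,U_{il}e^{p_l^k},\,L_{il}e^{p_l^k}\big)\Big)-\tfrac12\log\Big(\sum_{j=1}^n \mathrm{mid}\big(A_{lj}e^{-p_j^k},\,U_{lj}e^{-p_l^k},\,L_{lj}e^{-p_l^k}\big)\Big).$$ If $A$ has a truncated scaling, then $(p^k)$ converges at least linearly to a vector $p^*$ (that is, $\|p^k-p^*\|\le C\rho^k$ for all $k$, with constants $C$ and $0\le\rho<1$) such that $D=\mathrm{diag}(e^{-p^*})$ is a solution of the truncated scaling problem, i.e. $X=T(D^{-1}AD)$ satisfies $\sum_k X_{ik}=\sum_j X_{ji}$ for all $i$. -/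
/-- `mid(x, a, b) = max(min(x, a), b)`, where the upper bound `a` may be `+∞`. The extended real
`max (min x a) b` lies between `b` and `max x b`, so it is a real number and `toReal` only changes
its type. -/
noncomputable def mid (x : ℝ) (a : EReal) (b : ℝ) : ℝ :=
  (max (min (x : EReal) a) (b : EReal)).toReal

/-- The truncation operator `T(X)_{ij} = max(min(X_{ij}, U_{ij}), L_{ij})`. -/
noncomputable def truncation {n : ℕ} (L : Matrix (Fin n) (Fin n) ℝ)
    (U : Matrix (Fin n) (Fin n) EReal) (X : Matrix (Fin n) (Fin n) ℝ) :
    Matrix (Fin n) (Fin n) ℝ :=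
  Matrix.of fun i j => mid (X i j) (U i j) (L i j)

/-- `D = diag(d)`, with positive diagonal entries, solves the truncated scaling problem:
`X = T(D⁻¹ A D)` satisfies `∑_k X_{ik} = ∑_j X_{ji}` for all `i`. -/
def IsTruncScaling {n : ℕ} (A L : Matrix (Fin n) (Fin n) ℝ)
    (U : Matrix (Fin n) (Fin n) EReal) (d : Fin n → ℝ) : Prop :=
  (∀ i, 0 < d i) ∧
  ∀ i, ∑ k, truncation L U ((Matrix.diagonal d)⁻¹ * A * Matrix.diagonal d) i k =
    ∑ j, truncation L U ((Matrix.diagonal d)⁻¹ * A * Matrix.diagonal d) j i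

/-- The new value of the coordinate `l` in a step of the exact coordinate descent at `p`. -/
noncomputable def truncUpdate {n : ℕ} (A L : Matrix (Fin n) (Fin n) ℝ)
    (U : Matrix (Fin n) (Fin n) EReal) (p : Fin n → ℝ) (l : Fin n) : ℝ :=
  (1 / 2) * Real.log (∑ i, mid (A i l * Real.exp (p i))
      (U i l * (Real.exp (p l) : EReal)) (L i l * Real.exp (p l)))
    - (1 / 2) * Real.log (∑ j, mid (A l j * Real.exp (-(p j)))
      (U l j * (Real.exp (-(p l)) : EReal)) (L l j * Real.exp (-(p l))))

open Finset Filter Topology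

/-- A family of nonnegative nondecreasing functions growing at most exponentially, such that on
each side of each point they are locally constant or grow at least linearly, and such that all
row and column sums are positive. -/
structure IsScalingFamily {ι : Type*} (ψ : ι → ι → ℝ → ℝ) : Prop where
  nonneg : ∀ i j t, 0 ≤ ψ i j t
  mono : ∀ i j, Monotone (ψ i j)
  scale : ∀ i j t h, 0 ≤ h → ψ i j (t + h) ≤ Real.exp h * ψ i j t
  right : ∀ i j s, ∃ c > 0, (∀ t, 0 ≤ t → t ≤ c → ψ i j (s + t) = ψ i j s) ∨
    (∀ t, 0 ≤ t → t ≤ c → ψ i j s + c * t ≤ ψ i j (s + t))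
  left : ∀ i j s, ∃ c > 0, (∀ t, 0 ≤ t → t ≤ c → ψ i j (s - t) = ψ i j s) ∨
    (∀ t, 0 ≤ t → t ≤ c → ψ i j (s - t) ≤ ψ i j s - c * t)
  row_pos : ∀ i, ∃ j, ∀ t, 0 < ψ i j t
  col_pos : ∀ j, ∃ i, ∀ t, 0 < ψ i j t

theorem IsScalingFamily.le_exp_mul {ι : Type*} {ψ : ι → ι → ℝ → ℝ} (hψ : IsScalingFamily ψ)
    (i j : ι) {a b h : ℝ} (hh : 0 ≤ h) (hab : a ≤ b + h) : ψ i j a ≤ Real.exp h * ψ i j b :=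
  (hψ.mono i j hab).trans (hψ.scale i j b h hh)

section Potential

variable {ι : Type*} [Fintype ι] {ψ : ι → ι → ℝ → ℝ}

/-- The `l`-th row sum of the scaled matrix. -/
def rowSum (ψ : ι → ι → ℝ → ℝ) (p : ι → ℝ) (l : ι) : ℝ := ∑ j, ψ l j (p l - p j)

/-- The `l`-th column sum of the scaled matrix. -/
def colSum (ψ : ι → ι → ℝ → ℝ) (p : ι → ℝ) (l : ι) : ℝ := ∑ i, ψ i l (p i - p l)

/-- The gradient of the potential. -/
def imbalance (ψ : ι → ι → ℝ → ℝ) (p : ι → ℝ) (l : ι) : ℝ := rowSum ψ p l - colSum ψ p l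

/-- The displacement of the coordinate `l` in a descent step. -/
noncomputable def stepLength (ψ : ι → ι → ℝ → ℝ) (p : ι → ℝ) (l : ι) : ℝ :=
  (Real.log (colSum ψ p l) - Real.log (rowSum ψ p l)) / 2

/-- The convex potential whose critical points are the balanced vectors. -/
noncomputable def potential (ψ : ι → ι → ℝ → ℝ) (p : ι → ℝ) : ℝ :=
  ∑ i, ∑ j, ∫ x in (0 : ℝ)..(p i - p j), ψ i j x

theorem Monotone.mul_sub_le_integral_sub {f : ℝ → ℝ} (hf : Monotone f) (a b : ℝ) :
    f a * (b - a) ≤ (∫ x in (0 : ℝ)..b, f x) - ∫ x in (0 : ℝ)..a, f x := by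
  rw [intervalIntegral.integral_interval_sub_left hf.intervalIntegrable hf.intervalIntegrable]
  rcases le_total a b with h | h
  · have := intervalIntegral.integral_mono_on (μ := MeasureTheory.volume) (f := fun _ => f a) h
      (by simp) hf.intervalIntegrable (fun x hx => hf hx.1)
    simp at this
    linarith
  · rw [intervalIntegral.integral_symm]
    have := intervalIntegral.integral_mono_on (μ := MeasureTheory.volume) (g := fun _ => f a) h
      hf.intervalIntegrable (by simp) (fun x hx => hf hx.2)
    simp at this
    linarith

theorem sum_mul_sub_eq_sum_imbalance_mul (p v : ι → ℝ) :
    ∑ i, ∑ j, ψ i j (p i - p j) * (v i - v j) = ∑ l, imbalance ψ p l * v l := by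
  simp only [imbalance, rowSum, colSum, sub_mul, mul_sub, sum_sub_distrib, sum_mul]
  congr 1
  exact sum_comm

theorem IsScalingFamily.sum_imbalance_mul_le (hψ : IsScalingFamily ψ) (p q : ι → ℝ) :
    ∑ l, imbalance ψ p l * (q l - p l) ≤ potential ψ q - potential ψ p := by
  rw [← sum_mul_sub_eq_sum_imbalance_mul p (fun l => q l - p l)]
  simp only [potential, ← sum_sub_distrib]
  refine sum_le_sum fun i _ => sum_le_sum fun j _ => ?_
  refine le_trans (le_of_eq ?_) ((hψ.mono i j).mul_sub_le_integral_sub (p i - p j) (q i - q j))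
  ring

theorem IsScalingFamily.potential_le (hψ : IsScalingFamily ψ) {s : ι → ℝ}
    (hs : ∀ l, imbalance ψ s l = 0) (p : ι → ℝ) : potential ψ s ≤ potential ψ p := by
  have := hψ.sum_imbalance_mul_le s p
  simp only [hs, zero_mul, sum_const_zero] at this
  linarith

theorem IsScalingFamily.rowSum_le (hψ : IsScalingFamily ψ) {p q : ι → ℝ} {l : ι} {h : ℝ}
    (hh : 0 ≤ h) (hpq : ∀ j, p l - p j ≤ q l - q j + h) :
    rowSum ψ p l ≤ Real.exp h * rowSum ψ q l := by
  rw [rowSum, rowSum, mul_sum]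
  exact sum_le_sum fun j _ => hψ.le_exp_mul l j hh (hpq j)

theorem IsScalingFamily.colSum_le (hψ : IsScalingFamily ψ) {p q : ι → ℝ} {l : ι} {h : ℝ}
    (hh : 0 ≤ h) (hpq : ∀ i, p i - p l ≤ q i - q l + h) :
    colSum ψ p l ≤ Real.exp h * colSum ψ q l := by
  rw [colSum, colSum, mul_sum]
  exact sum_le_sum fun i _ => hψ.le_exp_mul i l hh (hpq i)

theorem IsScalingFamily.rowSum_pos (hψ : IsScalingFamily ψ) (p : ι → ℝ) (l : ι) :
    0 < rowSum ψ p l := by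
  obtain ⟨j, hj⟩ := hψ.row_pos l
  exact sum_pos' (fun _ _ => hψ.nonneg _ _ _) ⟨j, mem_univ _, hj _⟩

theorem IsScalingFamily.colSum_pos (hψ : IsScalingFamily ψ) (p : ι → ℝ) (l : ι) :
    0 < colSum ψ p l := by
  obtain ⟨i, hi⟩ := hψ.col_pos l
  exact sum_pos' (fun _ _ => hψ.nonneg _ _ _) ⟨i, mem_univ _, hi _⟩

theorem IsScalingFamily.colSum_eq (hψ : IsScalingFamily ψ) (p : ι → ℝ) (l : ι) :
    colSum ψ p l = Real.exp (2 * stepLength ψ p l) * rowSum ψ p l := by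
  have h : 2 * stepLength ψ p l = Real.log (colSum ψ p l) - Real.log (rowSum ψ p l) := by
    rw [stepLength]; ring
  rw [h, Real.exp_sub, Real.exp_log (hψ.colSum_pos p l), Real.exp_log (hψ.rowSum_pos p l)]
  field_simp [(hψ.rowSum_pos p l).ne']

end Potential

section Step

variable {ι : Type*} [Fintype ι] [DecidableEq ι] {ψ : ι → ι → ℝ → ℝ}

/-- The descent step in the coordinate `l`. -/
noncomputable def descentStep (ψ : ι → ι → ℝ → ℝ) (p : ι → ℝ) (l : ι) : ι → ℝ :=
  Function.update p l (p l + stepLength ψ p l)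

theorem IsScalingFamily.mul_le_potential_sub (hψ : IsScalingFamily ψ) (p : ι → ℝ) (l : ι)
    (x y : ℝ) : imbalance ψ (Function.update p l y) l * (x - y) ≤
      potential ψ (Function.update p l x) - potential ψ (Function.update p l y) := by
  have h := hψ.sum_imbalance_mul_le (Function.update p l y) (Function.update p l x)
  rw [sum_eq_single l] at h
  · simpa using h
  · intro b _ hb
    simp [hb]
  · simp

theorem IsScalingFamily.imbalance_update_le (hψ : IsScalingFamily ψ) (p : ι → ℝ) (l : ι) {t : ℝ}
    (ht : 0 ≤ t) : imbalance ψ (Function.update p l (p l + t)) l ≤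
      Real.exp t * rowSum ψ p l - Real.exp (-t) * colSum ψ p l := by
  have h1 : rowSum ψ (Function.update p l (p l + t)) l ≤ Real.exp t * rowSum ψ p l := by
    refine hψ.rowSum_le ht fun j => ?_
    by_cases hj : j = l
    · subst hj; simp [ht]
    · simp [hj]; linarith
  have h2 : colSum ψ p l ≤ Real.exp t * colSum ψ (Function.update p l (p l + t)) l := by
    refine hψ.colSum_le ht fun j => ?_
    by_cases hj : j = l
    · subst hj; simp [ht]
    · simp [hj]; linarith
  have h3 : Real.exp (-t) * colSum ψ p l ≤ colSum ψ (Function.update p l (p l + t)) l := by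
    rw [Real.exp_neg, inv_mul_le_iff₀ (Real.exp_pos t)]
    exact h2
  rw [imbalance]
  linarith

theorem IsScalingFamily.le_imbalance_update (hψ : IsScalingFamily ψ) (p : ι → ℝ) (l : ι) {t : ℝ}
    (ht : 0 ≤ t) : Real.exp (-t) * rowSum ψ p l - Real.exp t * colSum ψ p l ≤
      imbalance ψ (Function.update p l (p l - t)) l := by
  have h1 : colSum ψ (Function.update p l (p l - t)) l ≤ Real.exp t * colSum ψ p l := by
    refine hψ.colSum_le ht fun j => ?_
    by_cases hj : j = l
    · subst hj; simp [ht]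
    · simp [hj]
  have h2 : rowSum ψ p l ≤ Real.exp t * rowSum ψ (Function.update p l (p l - t)) l := by
    refine hψ.rowSum_le ht fun j => ?_
    by_cases hj : j = l
    · subst hj; simp [ht]
    · simp [hj]; linarith
  have h3 : Real.exp (-t) * rowSum ψ p l ≤ rowSum ψ (Function.update p l (p l - t)) l := by
    rw [Real.exp_neg, inv_mul_le_iff₀ (Real.exp_pos t)]
    exact h2
  rw [imbalance]
  linarith

theorem le_exp_three_halves_sub {t : ℝ} (ht : 0 ≤ t) :
    t ≤ Real.exp (-(t / 2)) * Real.exp (2 * t) - Real.exp (t / 2) := by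
  have h1 : Real.exp (-(t / 2)) * Real.exp (2 * t) = Real.exp (t / 2) * Real.exp t := by
    rw [← Real.exp_add, ← Real.exp_add]; ring_nf
  have h2 : 1 ≤ Real.exp (t / 2) := Real.one_le_exp (by linarith)
  have h3 := Real.add_one_le_exp t
  rw [h1]
  nlinarith

/-- A descent step decreases the potential quadratically in its length. -/
theorem IsScalingFamily.potential_descentStep (hψ : IsScalingFamily ψ) (p : ι → ℝ) (l : ι)
    {m : ℝ} (hr : m ≤ rowSum ψ p l) (hc : m ≤ colSum ψ p l) :
    m / 2 * stepLength ψ p l ^ 2 ≤ potential ψ p - potential ψ (descentStep ψ p l) := by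
  have hcol := hψ.colSum_eq p l
  have hrpos := hψ.rowSum_pos p l
  have hcpos := hψ.colSum_pos p l
  rw [descentStep]
  set t := stepLength ψ p l
  set r := rowSum ψ p l
  set c := colSum ψ p l
  rcases le_total 0 t with ht | ht
  · have h1 := hψ.mul_le_potential_sub p l (p l) (p l + t / 2)
    have h2 := hψ.mul_le_potential_sub p l (p l + t / 2) (p l + t)
    have g1 := hψ.imbalance_update_le p l (t := t / 2) (by linarith)
    have g2 := hψ.imbalance_update_le p l ht
    have e2 : Real.exp t * r - Real.exp (-t) * c = 0 := by
      rw [hcol, ← mul_assoc, ← Real.exp_add]; ring_nf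
    have e1 : Real.exp (t / 2) * r - Real.exp (-(t / 2)) * c ≤ -(m * t) := by
      rw [hcol]
      have := le_exp_three_halves_sub ht
      nlinarith [mul_le_mul_of_nonneg_left this hrpos.le, mul_le_mul_of_nonneg_right hr ht]
    rw [Function.update_eq_self] at h1
    have k1 : imbalance ψ (Function.update p l (p l + t / 2)) l ≤ -(m * t) := g1.trans e1
    have k2 : imbalance ψ (Function.update p l (p l + t)) l ≤ 0 := g2.trans e2.le
    nlinarith [mul_le_mul_of_nonneg_right k1 ht, mul_le_mul_of_nonneg_right k2 ht]
  · obtain ⟨τ, hτ⟩ : ∃ τ, t = -τ := ⟨-t, by ring⟩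
    have hτ0 : 0 ≤ τ := by linarith
    have hrow : r = Real.exp (2 * τ) * c := by
      rw [hcol, hτ, ← mul_assoc, ← Real.exp_add]; ring_nf; simp
    rw [hτ, ← sub_eq_add_neg]
    have h1 := hψ.mul_le_potential_sub p l (p l) (p l - τ / 2)
    have h2 := hψ.mul_le_potential_sub p l (p l - τ / 2) (p l - τ)
    have g1 := hψ.le_imbalance_update p l (t := τ / 2) (by linarith)
    have g2 := hψ.le_imbalance_update p l hτ0
    have e2 : Real.exp (-τ) * r - Real.exp τ * c = 0 := by
      rw [hrow, ← mul_assoc, ← Real.exp_add]; ring_nf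
    have e1 : m * τ ≤ Real.exp (-(τ / 2)) * r - Real.exp (τ / 2) * c := by
      rw [hrow]
      have := le_exp_three_halves_sub hτ0
      nlinarith [mul_le_mul_of_nonneg_left this hcpos.le, mul_le_mul_of_nonneg_right hc hτ0]
    rw [Function.update_eq_self] at h1
    have k1 : m * τ ≤ imbalance ψ (Function.update p l (p l - τ / 2)) l := e1.trans g1
    have k2 : 0 ≤ imbalance ψ (Function.update p l (p l - τ)) l := e2.ge.trans g2
    nlinarith [mul_le_mul_of_nonneg_right k1 hτ0, mul_le_mul_of_nonneg_right k2 hτ0]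

theorem IsScalingFamily.descentStep_le (hψ : IsScalingFamily ψ) {p q : ι → ℝ} {h : ℝ}
    (hpq : ∀ i, p i ≤ q i + h) (l i : ι) : descentStep ψ p l i ≤ descentStep ψ q l i + h := by
  by_cases hi : i = l
  · subst hi
    have h0 : 0 ≤ q i + h - p i := by linarith [hpq i]
    have h1 := hψ.colSum_le (p := p) (q := q) (l := i) h0 fun j => by linarith [hpq j]
    have h2 := hψ.rowSum_le (p := q) (q := p) (l := i) h0 fun j => by linarith [hpq j]
    have l1 := Real.log_le_log (hψ.colSum_pos p i) h1
    have l2 := Real.log_le_log (hψ.rowSum_pos q i) h2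
    rw [Real.log_mul (Real.exp_pos _).ne' (hψ.colSum_pos q i).ne', Real.log_exp] at l1
    rw [Real.log_mul (Real.exp_pos _).ne' (hψ.rowSum_pos p i).ne', Real.log_exp] at l2
    simp only [descentStep, Function.update_self, stepLength]
    linarith
  · simpa [descentStep, hi] using hpq i

/-- A descent step is nonexpansive in the sup norm. -/
theorem IsScalingFamily.norm_descentStep_sub_le (hψ : IsScalingFamily ψ) (p q : ι → ℝ) (l : ι) :
    ‖descentStep ψ p l - descentStep ψ q l‖ ≤ ‖p - q‖ := by
  have key : ∀ i, |p i - q i| ≤ ‖p - q‖ := fun i => norm_le_pi_norm (p - q) i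
  refine (pi_norm_le_iff_of_nonneg (norm_nonneg _)).2 fun i => ?_
  rw [Pi.sub_apply, Real.norm_eq_abs, abs_le]
  have h1 := hψ.descentStep_le (p := p) (q := q) (h := ‖p - q‖)
    (fun i => by linarith [(abs_le.1 (key i)).2]) l i
  have h2 := hψ.descentStep_le (p := q) (q := p) (h := ‖p - q‖)
    (fun i => by linarith [(abs_le.1 (key i)).1]) l i
  constructor <;> linarith

theorem descentStep_of_imbalance_eq_zero {s : ι → ℝ} {l : ι} (hs : imbalance ψ s l = 0) :
    descentStep ψ s l = s := by
  have : rowSum ψ s l = colSum ψ s l := sub_eq_zero.1 hs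
  simp [descentStep, stepLength, this]

theorem norm_descentStep_sub_self (p : ι → ℝ) (l : ι) :
    ‖descentStep ψ p l - p‖ = |stepLength ψ p l| := by
  have : descentStep ψ p l - p = Pi.single l (stepLength ψ p l) := by
    ext i
    by_cases hi : i = l
    · subst hi; simp [descentStep]
    · simp [descentStep, hi]
  rw [this, Pi.norm_single, Real.norm_eq_abs]

end Step

theorem abs_sub_le_mul_abs_log_sub {x y M : ℝ} (hx : 0 < x) (hy : 0 < y) (hxM : x ≤ M)
    (hyM : y ≤ M) : |x - y| ≤ M * |Real.log x - Real.log y| := by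
  have aux : ∀ {x y : ℝ}, 0 < x → 0 < y → x ≤ M → x - y ≤ M * |Real.log x - Real.log y| := by
    intro x y hx hy hxM
    have h := Real.log_le_sub_one_of_pos (div_pos hy hx)
    rw [Real.log_div hy.ne' hx.ne'] at h
    have h1 : x - y ≤ x * (Real.log x - Real.log y) := by
      have := mul_le_mul_of_nonneg_left h hx.le
      have e : x * (y / x - 1) = y - x := by field_simp
      linarith
    refine h1.trans ((mul_le_mul_of_nonneg_left (le_abs_self _) hx.le).trans ?_)
    exact mul_le_mul_of_nonneg_right hxM (abs_nonneg _)
  rw [abs_le]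
  constructor
  · have := aux hy hx hyM
    rw [abs_sub_comm] at this
    linarith
  · exact aux hx hy hxM

section Bounds

variable {ι : Type*} [Fintype ι] {ψ : ι → ι → ℝ → ℝ}

theorem sub_le_sub_add_two_mul_norm (p q : ι → ℝ) (i j : ι) :
    p i - p j ≤ q i - q j + 2 * ‖p - q‖ := by
  have hi := abs_le.1 (norm_le_pi_norm (p - q) i)
  have hj := abs_le.1 (norm_le_pi_norm (p - q) j)
  simp only [Pi.sub_apply] at hi hj
  linarith [hi.2, hj.1]

theorem IsScalingFamily.rowSum_le_norm (hψ : IsScalingFamily ψ) (p q : ι → ℝ) (l : ι) :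
    rowSum ψ p l ≤ Real.exp (2 * ‖p - q‖) * rowSum ψ q l :=
  hψ.rowSum_le (by positivity) fun j => sub_le_sub_add_two_mul_norm p q l j

theorem IsScalingFamily.colSum_le_norm (hψ : IsScalingFamily ψ) (p q : ι → ℝ) (l : ι) :
    colSum ψ p l ≤ Real.exp (2 * ‖p - q‖) * colSum ψ q l :=
  hψ.colSum_le (by positivity) fun i => sub_le_sub_add_two_mul_norm p q i l

theorem IsScalingFamily.abs_log_rowSum_sub_le (hψ : IsScalingFamily ψ) (p q : ι → ℝ) (l : ι) :
    |Real.log (rowSum ψ p l) - Real.log (rowSum ψ q l)| ≤ 2 * ‖p - q‖ := by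
  have aux : ∀ p q : ι → ℝ, Real.log (rowSum ψ p l) ≤ 2 * ‖p - q‖ + Real.log (rowSum ψ q l) := by
    intro p q
    have := Real.log_le_log (hψ.rowSum_pos p l) (hψ.rowSum_le_norm p q l)
    rwa [Real.log_mul (Real.exp_pos _).ne' (hψ.rowSum_pos q l).ne', Real.log_exp] at this
  have h2 := aux q p
  rw [norm_sub_rev] at h2
  rw [abs_le]
  constructor <;> linarith [aux p q]

theorem IsScalingFamily.abs_log_colSum_sub_le (hψ : IsScalingFamily ψ) (p q : ι → ℝ) (l : ι) :
    |Real.log (colSum ψ p l) - Real.log (colSum ψ q l)| ≤ 2 * ‖p - q‖ := by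
  have aux : ∀ p q : ι → ℝ, Real.log (colSum ψ p l) ≤ 2 * ‖p - q‖ + Real.log (colSum ψ q l) := by
    intro p q
    have := Real.log_le_log (hψ.colSum_pos p l) (hψ.colSum_le_norm p q l)
    rwa [Real.log_mul (Real.exp_pos _).ne' (hψ.colSum_pos q l).ne', Real.log_exp] at this
  have h2 := aux q p
  rw [norm_sub_rev] at h2
  rw [abs_le]
  constructor <;> linarith [aux p q]

/-- Row and column sums lie between positive constants on bounded sets. -/
theorem IsScalingFamily.exists_bounds (hψ : IsScalingFamily ψ) (s : ι → ℝ) (R : ℝ) :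
    ∃ m > 0, ∃ M > 0, ∀ p, ‖p - s‖ ≤ R → ∀ l, m ≤ rowSum ψ p l ∧ m ≤ colSum ψ p l ∧
      rowSum ψ p l ≤ M ∧ colSum ψ p l ≤ M := by
  have hlow : ∃ m > 0, ∀ l, m ≤ rowSum ψ s l ∧ m ≤ colSum ψ s l := by
    have : ∀ᶠ m in 𝓝[>] (0 : ℝ), ∀ l, m ≤ rowSum ψ s l ∧ m ≤ colSum ψ s l := by
      refine eventually_all.2 fun l => ?_
      filter_upwards [Ioc_mem_nhdsGT (hψ.rowSum_pos s l), Ioc_mem_nhdsGT (hψ.colSum_pos s l)]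
        with m h1 h2 using ⟨h1.2, h2.2⟩
    obtain ⟨m, hm, hm0⟩ := (this.and self_mem_nhdsWithin).exists
    exact ⟨m, hm0, hm⟩
  obtain ⟨m, hm0, hm⟩ := hlow
  have e0 := Real.exp_pos (2 * R)
  refine ⟨(Real.exp (2 * R))⁻¹ * m, by positivity,
    Real.exp (2 * R) * (1 + ∑ l, (rowSum ψ s l + colSum ψ s l)), ?_, ?_⟩
  · have : 0 ≤ ∑ l, (rowSum ψ s l + colSum ψ s l) :=
      sum_nonneg fun l _ => (add_pos (hψ.rowSum_pos s l) (hψ.colSum_pos s l)).le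
    positivity
  · intro p hp l
    have he : Real.exp (2 * ‖p - s‖) ≤ Real.exp (2 * R) := Real.exp_le_exp.2 (by linarith)
    have he' : Real.exp (2 * ‖s - p‖) ≤ Real.exp (2 * R) := by rwa [norm_sub_rev]
    have hs : rowSum ψ s l + colSum ψ s l ≤ ∑ l, (rowSum ψ s l + colSum ψ s l) :=
      single_le_sum (f := fun l => rowSum ψ s l + colSum ψ s l)
        (fun l _ => (add_pos (hψ.rowSum_pos s l) (hψ.colSum_pos s l)).le) (mem_univ l)
    have r1 := hψ.rowSum_pos s l
    have c1 := hψ.colSum_pos s l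
    have r2 := hψ.rowSum_pos p l
    have c2 := hψ.colSum_pos p l
    refine ⟨?_, ?_, ?_, ?_⟩
    · rw [inv_mul_le_iff₀ e0]
      exact (hm l).1.trans ((hψ.rowSum_le_norm s p l).trans
        (mul_le_mul_of_nonneg_right he' r2.le))
    · rw [inv_mul_le_iff₀ e0]
      exact (hm l).2.trans ((hψ.colSum_le_norm s p l).trans
        (mul_le_mul_of_nonneg_right he' c2.le))
    · exact (hψ.rowSum_le_norm p s l).trans (mul_le_mul he (by linarith) r1.le e0.le)
    · exact (hψ.colSum_le_norm p s l).trans (mul_le_mul he (by linarith) c1.le e0.le)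

theorem IsScalingFamily.abs_imbalance_sub_le (hψ : IsScalingFamily ψ) {p q : ι → ℝ} {l : ι}
    {M : ℝ} (hp : rowSum ψ p l ≤ M ∧ colSum ψ p l ≤ M) (hq : rowSum ψ q l ≤ M ∧ colSum ψ q l ≤ M) :
    |imbalance ψ p l - imbalance ψ q l| ≤ 4 * M * ‖p - q‖ := by
  have hM : 0 ≤ M := (hψ.rowSum_pos p l).le.trans hp.1
  have h1 := (abs_sub_le_mul_abs_log_sub (hψ.rowSum_pos p l) (hψ.rowSum_pos q l) hp.1 hq.1).trans
    (mul_le_mul_of_nonneg_left (hψ.abs_log_rowSum_sub_le p q l) hM)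
  have h2 := (abs_sub_le_mul_abs_log_sub (hψ.colSum_pos p l) (hψ.colSum_pos q l) hp.2 hq.2).trans
    (mul_le_mul_of_nonneg_left (hψ.abs_log_colSum_sub_le p q l) hM)
  have h3 : imbalance ψ p l - imbalance ψ q l =
      (rowSum ψ p l - rowSum ψ q l) - (colSum ψ p l - colSum ψ q l) := by
    simp only [imbalance]; ring
  rw [h3]
  refine (abs_sub _ _).trans ?_
  linarith

theorem IsScalingFamily.abs_imbalance_le (hψ : IsScalingFamily ψ) {p : ι → ℝ} {l : ι}
    {M : ℝ} (hp : rowSum ψ p l ≤ M ∧ colSum ψ p l ≤ M) :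
    |imbalance ψ p l| ≤ 2 * M * |stepLength ψ p l| := by
  have h := abs_sub_le_mul_abs_log_sub (hψ.rowSum_pos p l) (hψ.colSum_pos p l) hp.1 hp.2
  rw [abs_sub_comm (Real.log _)] at h
  rw [stepLength, abs_div, abs_two, imbalance]
  linarith

end Bounds

theorem Relation.ReflTransGen.exists_le_add_mul {ι : Type*} {E : ι → ι → Prop} {i j : ι}
    (h : Relation.ReflTransGen E i j) : ∃ N : ℝ, 0 ≤ N ∧ ∀ (u : ι → ℝ) (ε : ℝ),
      (∀ a b, E a b → u a ≤ u b + ε) → u i ≤ u j + N * ε := by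
  induction h with
  | refl => exact ⟨0, le_rfl, fun u ε _ => by simp⟩
  | tail _ hbc ih =>
    obtain ⟨N, hN, h⟩ := ih
    refine ⟨N + 1, by positivity, fun u ε hu => ?_⟩
    linarith [h u ε hu, hu _ _ hbc]

/-- A Hoffman bound for the order constraints given by a relation on a finite type. -/
theorem exists_monotone_approx {ι : Type*} [Fintype ι] (E : ι → ι → Prop) :
    ∃ N : ℝ, 0 ≤ N ∧ ∀ (u : ι → ℝ) (ε : ℝ), 0 ≤ ε → (∀ a b, E a b → u a ≤ u b + ε) →
      ∃ q : ι → ℝ, (∀ a b, E a b → q a ≤ q b) ∧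
        ∀ i, (∃ j, q i = u j) ∧ |u i - q i| ≤ N * ε := by
  classical
  have hN : ∀ x : ι × ι, ∃ N : ℝ, 0 ≤ N ∧ (Relation.ReflTransGen E x.1 x.2 →
      ∀ (u : ι → ℝ) (ε : ℝ), (∀ a b, E a b → u a ≤ u b + ε) → u x.1 ≤ u x.2 + N * ε) := by
    intro x
    by_cases h : Relation.ReflTransGen E x.1 x.2
    · obtain ⟨N, h0, h1⟩ := h.exists_le_add_mul
      exact ⟨N, h0, fun _ => h1⟩
    · exact ⟨0, le_rfl, fun h' => absurd h' h⟩
  choose N hN0 hN using hN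
  refine ⟨∑ x, N x, sum_nonneg fun x _ => hN0 x, fun u ε hε hu => ?_⟩
  let S : ι → Finset ι := fun i => univ.filter fun j => Relation.ReflTransGen E i j
  have hS : ∀ i, (S i).Nonempty := fun i => ⟨i, by simp [S, Relation.ReflTransGen.refl]⟩
  have hmin : ∀ i, ∃ k ∈ S i, ∀ j ∈ S i, u k ≤ u j := fun i => exists_min_image (S i) u (hS i)
  choose k hkS hk using hmin
  refine ⟨fun i => u (k i), fun a b hab => ?_, fun i => ⟨⟨k i, rfl⟩, ?_⟩⟩
  · refine hk a _ ?_
    have := hkS b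
    simp only [S, mem_filter, mem_univ, true_and] at this ⊢
    exact Relation.ReflTransGen.head hab this
  · have h1 : u (k i) ≤ u i := hk i i (by simp [S, Relation.ReflTransGen.refl])
    have hr : Relation.ReflTransGen E i (k i) := by simpa [S] using hkS i
    have h2 := hN (i, k i) hr u ε hu
    have h3 : N (i, k i) ≤ ∑ x, N x := single_le_sum (fun x _ => hN0 x) (mem_univ _)
    have h4 := mul_le_mul_of_nonneg_right h3 hε
    rw [abs_of_nonneg (by linarith)]
    simp only at h2
    linarith

theorem sum_sum_eq_zero_of_antisymm {ι : Type*} (R : Finset ι) (Z : ι → ι → ℝ) (hZ : ∀ i j, Z i j = -Z j i) :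
    ∑ i ∈ R, ∑ j ∈ R, Z i j = 0 := by
  have h1 : ∑ i ∈ R, ∑ j ∈ R, Z i j = ∑ i ∈ R, ∑ j ∈ R, Z j i := sum_comm
  have h2 : ∑ i ∈ R, ∑ j ∈ R, Z i j = -∑ i ∈ R, ∑ j ∈ R, Z j i := by
    simp only [← sum_neg_distrib]
    exact sum_congr rfl fun i _ => sum_congr rfl fun j _ => hZ i j
  linarith

section ErrorBound

variable {ι : Type*} [Fintype ι] {ψ : ι → ι → ℝ → ℝ}

/-- The deviation of each entry from its balanced value is bounded by the imbalance, by summing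
the imbalances over a superlevel set of `p - s`. -/
theorem IsScalingFamily.entry_sub_le (hψ : IsScalingFamily ψ) {s p : ι → ℝ} {G : ℝ}
    (hs : ∀ l, imbalance ψ s l = 0) (hG : ∀ l, |imbalance ψ p l| ≤ G) {i j : ι}
    (hij : p j - s j < p i - s i) :
    (ψ i j (p i - p j) - ψ i j (s i - s j)) - (ψ j i (p j - p i) - ψ j i (s j - s i)) ≤
      Fintype.card ι * G := by
  classical
  have hG0 : 0 ≤ G := (abs_nonneg _).trans (hG i)
  let R : Finset ι := univ.filter fun k => p i - s i ≤ p k - s k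
  let Z : ι → ι → ℝ := fun k m =>
    (ψ k m (p k - p m) - ψ k m (s k - s m)) - (ψ m k (p m - p k) - ψ m k (s m - s k))
  have hZnn : ∀ k ∈ R, ∀ m ∈ Rᶜ, 0 ≤ Z k m := by
    intro k hk m hm
    simp only [R, mem_compl, mem_filter, mem_univ, true_and, not_le] at hk hm
    have h1 : ψ k m (s k - s m) ≤ ψ k m (p k - p m) := hψ.mono k m (by linarith)
    have h2 : ψ m k (p m - p k) ≤ ψ m k (s m - s k) := hψ.mono m k (by linarith)
    simp only [Z]
    linarith
  have hsum : ∀ k, ∑ m, Z k m = imbalance ψ p k := by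
    intro k
    have := hs k
    simp only [imbalance, rowSum, colSum] at this ⊢
    simp only [Z, sum_sub_distrib]
    linarith
  have htot : ∑ k ∈ R, imbalance ψ p k = ∑ k ∈ R, ∑ m ∈ Rᶜ, Z k m := by
    rw [← add_zero (∑ k ∈ R, ∑ m ∈ Rᶜ, Z k m),
      ← sum_sum_eq_zero_of_antisymm R Z (fun a b => by simp only [Z]; ring), ← sum_add_distrib]
    refine sum_congr rfl fun k _ => ?_
    rw [← hsum k, add_comm, sum_add_sum_compl]
  have hiR : i ∈ R := by simp [R]
  have hjR : j ∈ Rᶜ := by simp [R]; linarith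
  have h1 : Z i j ≤ ∑ k ∈ R, ∑ m ∈ Rᶜ, Z k m :=
    (single_le_sum (hZnn i hiR) hjR).trans
      (single_le_sum (f := fun k => ∑ m ∈ Rᶜ, Z k m)
        (fun k hk => sum_nonneg (hZnn k hk)) hiR)
  have h2 : ∑ k ∈ R, imbalance ψ p k ≤ Fintype.card ι * G := by
    calc ∑ k ∈ R, imbalance ψ p k ≤ ∑ k ∈ R, G :=
          sum_le_sum fun k _ => (le_abs_self _).trans (hG k)
      _ = #R * G := by simp
      _ ≤ Fintype.card ι * G := by
          refine mul_le_mul_of_nonneg_right ?_ hG0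
          exact_mod_cast card_le_univ R
  change Z i j ≤ _
  linarith

/-- A uniform version of the local alternative between constancy and linear growth. -/
theorem IsScalingFamily.exists_uniform_growth (hψ : IsScalingFamily ψ) (s : ι → ℝ) :
    ∃ c > 0, ∀ i j,
      ((∀ t, 0 ≤ t → t ≤ c → ψ i j (s i - s j + t) = ψ i j (s i - s j)) ∨
        (∀ t, 0 ≤ t → t ≤ c → ψ i j (s i - s j) + c * t ≤ ψ i j (s i - s j + t))) ∧
      ((∀ t, 0 ≤ t → t ≤ c → ψ i j (s i - s j - t) = ψ i j (s i - s j)) ∨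
        (∀ t, 0 ≤ t → t ≤ c → ψ i j (s i - s j - t) ≤ ψ i j (s i - s j) - c * t)) := by
  have : ∀ᶠ c in 𝓝[>] (0 : ℝ), ∀ i j,
      ((∀ t, 0 ≤ t → t ≤ c → ψ i j (s i - s j + t) = ψ i j (s i - s j)) ∨
        (∀ t, 0 ≤ t → t ≤ c → ψ i j (s i - s j) + c * t ≤ ψ i j (s i - s j + t))) ∧
      ((∀ t, 0 ≤ t → t ≤ c → ψ i j (s i - s j - t) = ψ i j (s i - s j)) ∨
        (∀ t, 0 ≤ t → t ≤ c → ψ i j (s i - s j - t) ≤ ψ i j (s i - s j) - c * t)) := by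
    refine eventually_all.2 fun i => eventually_all.2 fun j => ?_
    obtain ⟨a, ha, hR⟩ := hψ.right i j (s i - s j)
    obtain ⟨b, hb, hLft⟩ := hψ.left i j (s i - s j)
    filter_upwards [Ioc_mem_nhdsGT ha, Ioc_mem_nhdsGT hb] with c hca hcb
    refine ⟨hR.imp (fun h t h0 h1 => h t h0 (h1.trans hca.2)) fun h t h0 h1 => ?_,
      hLft.imp (fun h t h0 h1 => h t h0 (h1.trans hcb.2)) fun h t h0 h1 => ?_⟩
    · linarith [h t h0 (h1.trans hca.2), mul_le_mul_of_nonneg_right hca.2 h0]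
    · linarith [h t h0 (h1.trans hcb.2), mul_le_mul_of_nonneg_right hcb.2 h0]
  obtain ⟨c, hc, hc0⟩ := (this.and self_mem_nhdsWithin).exists
  exact ⟨c, hc0, hc⟩

/-- Near a balanced vector, the potential exceeds its minimum by at most a multiple of the squared
imbalance. -/
theorem IsScalingFamily.exists_error_bound (hψ : IsScalingFamily ψ) {s : ι → ℝ}
    (hs : ∀ l, imbalance ψ s l = 0) : ∃ δ > 0, ∃ C : ℝ, 0 ≤ C ∧ ∀ (p : ι → ℝ) (G : ℝ),
      0 ≤ G → ‖p - s‖ ≤ δ → (∀ l, |imbalance ψ p l| ≤ G) →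
      potential ψ p - potential ψ s ≤ C * G ^ 2 := by
  obtain ⟨c, hc0, hc⟩ := hψ.exists_uniform_growth s
  let E : ι → ι → Prop := fun i j =>
    (∀ t, 0 ≤ t → t ≤ c → ψ i j (s i - s j) + c * t ≤ ψ i j (s i - s j + t)) ∨
    (∀ t, 0 ≤ t → t ≤ c → ψ j i (s j - s i - t) ≤ ψ j i (s j - s i) - c * t)
  obtain ⟨N, hN0, hN⟩ := exists_monotone_approx E
  set n : ℝ := (Fintype.card ι : ℝ) with hn
  have hn0 : 0 ≤ n := by positivity
  refine ⟨c / 2, by positivity, n * (N * (n / c)), by positivity, fun p G hG0 hp hG => ?_⟩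
  have hu : ∀ i, |p i - s i| ≤ c / 2 := fun i => (norm_le_pi_norm (p - s) i).trans hp
  have hε : ∀ i j, E i j → p i - s i ≤ p j - s j + n * G / c := by
    intro i j hE
    have hpos : 0 ≤ n * G / c := by positivity
    rcases le_or_gt (p i - s i) (p j - s j) with h | h
    · linarith
    · have hcut := hψ.entry_sub_le hs hG h
      have hle : (p i - s i) - (p j - s j) ≤ c := by
        linarith [(abs_le.1 (hu i)).2, (abs_le.1 (hu j)).1]
      have h1 : ψ i j (s i - s j) ≤ ψ i j (p i - p j) := hψ.mono i j (by linarith)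
      have h2 : ψ j i (p j - p i) ≤ ψ j i (s j - s i) := hψ.mono j i (by linarith)
      have h3 : c * ((p i - s i) - (p j - s j)) ≤ n * G := by
        rcases hE with hE | hE
        · have := hE _ (by linarith) hle
          rw [show s i - s j + (p i - s i - (p j - s j)) = p i - p j by ring] at this
          linarith
        · have := hE _ (by linarith) hle
          rw [show s j - s i - (p i - s i - (p j - s j)) = p j - p i by ring] at this
          linarith
      have h4 : (p i - s i) - (p j - s j) ≤ n * G / c := by
        rw [le_div_iff₀ hc0]; linarith
      linarith
  obtain ⟨q, hqE, hq⟩ := hN (fun i => p i - s i) (n * G / c) (by positivity) hε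
  have hqc : ∀ i, |q i| ≤ c / 2 := fun i => by
    obtain ⟨j, hj⟩ := (hq i).1
    rw [hj]
    exact hu j
  have hX : ∀ i j, ψ i j ((s i + q i) - (s j + q j)) = ψ i j (s i - s j) := by
    intro i j
    rcases le_total (q j) (q i) with h | h
    · have e : (s i + q i) - (s j + q j) = s i - s j + (q i - q j) := by ring
      have hle : q i - q j ≤ c := by linarith [(abs_le.1 (hqc i)).2, (abs_le.1 (hqc j)).1]
      rcases (hc i j).1 with hf | hf
      · rw [e, hf _ (by linarith) hle]
      · have := hqE i j (Or.inl hf)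
        rw [e, le_antisymm this h, sub_self, add_zero]
    · have e : (s i + q i) - (s j + q j) = s i - s j - (q j - q i) := by ring
      have hle : q j - q i ≤ c := by linarith [(abs_le.1 (hqc j)).2, (abs_le.1 (hqc i)).1]
      rcases (hc i j).2 with hf | hf
      · rw [e, hf _ (by linarith) hle]
      · have := hqE j i (Or.inr hf)
        rw [e, le_antisymm this h, sub_self, sub_zero]
  have hbal : ∀ l, imbalance ψ (fun i => s i + q i) l = 0 := by
    intro l
    rw [← hs l]
    simp only [imbalance, rowSum, colSum, hX]
  have hpot := hψ.potential_le hbal s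
  have hconv := hψ.sum_imbalance_mul_le p (fun i => s i + q i)
  have hsum : |∑ l, imbalance ψ p l * (s l + q l - p l)| ≤ ∑ _l : ι, G * (N * (n * G / c)) := by
    refine (abs_sum_le_sum_abs _ _).trans (sum_le_sum fun l _ => ?_)
    rw [abs_mul]
    refine mul_le_mul (hG l) ?_ (abs_nonneg _) hG0
    rw [abs_sub_comm, show p l - (s l + q l) = p l - s l - q l by ring]
    exact (hq l).2
  rw [sum_const, card_univ, nsmul_eq_mul, ← hn] at hsum
  have e : n * (G * (N * (n * G / c))) = n * (N * (n / c)) * G ^ 2 := by ring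
  have := (abs_le.1 hsum).1
  linarith

end ErrorBound

theorem exists_geometric_bound {a : ℕ → ℝ} (h0 : ∀ k, 0 ≤ a k) (ha : Antitone a) {n K : ℕ}
    (hn : 0 < n) {θ : ℝ} (hθ0 : 0 < θ) (hθ1 : θ < 1) (h : ∀ k, K ≤ k → a (k + n) ≤ θ * a k) :
    ∃ C ρ : ℝ, 0 ≤ C ∧ 0 < ρ ∧ ρ < 1 ∧ ∀ k, a k ≤ C * ρ ^ k := by
  set ρ : ℝ := θ ^ ((n : ℝ)⁻¹) with hρ
  have hρ0 : 0 < ρ := Real.rpow_pos_of_pos hθ0 _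
  have hρ1 : ρ < 1 := Real.rpow_lt_one hθ0.le hθ1 (by positivity)
  have hρn : ρ ^ n = θ := Real.rpow_inv_natCast_pow hθ0.le hn.ne'
  refine ⟨a 0 / ρ ^ (K + n), ρ, div_nonneg (h0 0) (by positivity), hρ0, hρ1, fun k => ?_⟩
  induction k using Nat.strong_induction_on with
  | _ k ih =>
    rcases lt_or_ge k (K + n) with hk | hk
    · rw [div_mul_eq_mul_div, le_div_iff₀ (by positivity)]
      exact mul_le_mul (ha (Nat.zero_le k)) (pow_le_pow_of_le_one hρ0.le hρ1.le hk.le)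
        (by positivity) (h0 0)
    · obtain ⟨m, rfl⟩ : ∃ m, k = m + n := ⟨k - n, by omega⟩
      refine (h m (by omega)).trans ?_
      rw [pow_add ρ m n, hρn]
      have := mul_le_mul_of_nonneg_left (ih m (by omega)) hθ0.le
      linarith

section Convergence

variable {ι : Type*} [Fintype ι] [DecidableEq ι] {ψ : ι → ι → ℝ → ℝ}

theorem IsScalingFamily.antitone_norm_sub (hψ : IsScalingFamily ψ) {p : ℕ → ι → ℝ} {l : ℕ → ι}
    (hp : ∀ k, p (k + 1) = descentStep ψ (p k) (l k)) {s : ι → ℝ}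
    (hs : ∀ l, imbalance ψ s l = 0) : Antitone fun k => ‖p k - s‖ := by
  refine antitone_nat_of_succ_le fun k => ?_
  have := hψ.norm_descentStep_sub_le (p k) s (l k)
  rwa [descentStep_of_imbalance_eq_zero (hs _), ← hp] at this

theorem norm_sub_le_sum_stepLength {p : ℕ → ι → ℝ} {l : ℕ → ι}
    (hp : ∀ k, p (k + 1) = descentStep ψ (p k) (l k)) (k m : ℕ) :
    ‖p k - p (k + m)‖ ≤ ∑ j ∈ range m, |stepLength ψ (p (k + j)) (l (k + j))| := by
  induction m with
  | zero => simp
  | succ m ih =>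
    rw [sum_range_succ, ← norm_descentStep_sub_self, ← hp, norm_sub_rev (p (k + m + 1))]
    exact (norm_sub_le_norm_sub_add_norm_sub _ (p (k + m)) _).trans (by gcongr; rfl)

/-- The imbalance at an iterate is controlled by the lengths of the following `n` steps. -/
theorem IsScalingFamily.abs_imbalance_le_sum_stepLength (hψ : IsScalingFamily ψ)
    {p : ℕ → ι → ℝ} {l : ℕ → ι} (hp : ∀ k, p (k + 1) = descentStep ψ (p k) (l k)) {n : ℕ}
    (hl : ∀ k i, ∃ m < n, l (k + m) = i) {M : ℝ} (hM0 : 0 ≤ M)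
    (hM : ∀ k i, rowSum ψ (p k) i ≤ M ∧ colSum ψ (p k) i ≤ M) (k : ℕ) (i : ι) :
    |imbalance ψ (p k) i| ≤
      4 * M * ∑ j ∈ range n, |stepLength ψ (p (k + j)) (l (k + j))| := by
  obtain ⟨m, hmn, rfl⟩ := hl k i
  have h1 := hψ.abs_imbalance_sub_le (hM k (l (k + m))) (hM (k + m) (l (k + m)))
  have h2 := hψ.abs_imbalance_le (hM (k + m) (l (k + m)))
  have h3 := mul_le_mul_of_nonneg_left (norm_sub_le_sum_stepLength hp k m)
    (show 0 ≤ 4 * M by positivity)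
  have h4 : ∑ j ∈ range (m + 1), |stepLength ψ (p (k + j)) (l (k + j))| ≤
      ∑ j ∈ range n, |stepLength ψ (p (k + j)) (l (k + j))| :=
    sum_le_sum_of_subset_of_nonneg (range_mono hmn) fun _ _ _ => abs_nonneg _
  rw [sum_range_succ] at h4
  have h5 := abs_sub_abs_le_abs_sub (imbalance ψ (p k) (l (k + m)))
    (imbalance ψ (p (k + m)) (l (k + m)))
  have h6 := mul_le_mul_of_nonneg_left h4 (show 0 ≤ 4 * M by positivity)
  have h7 := mul_nonneg hM0 (abs_nonneg (stepLength ψ (p (k + m)) (l (k + m))))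
  linarith

/-- Cyclic coordinate descent converges linearly to a balanced vector, if there is one. -/
theorem IsScalingFamily.exists_linear_convergence (hψ : IsScalingFamily ψ)
    {p : ℕ → ι → ℝ} {l : ℕ → ι} (hp : ∀ k, p (k + 1) = descentStep ψ (p k) (l k)) {n : ℕ}
    (hn : 0 < n) (hl : ∀ k i, ∃ m < n, l (k + m) = i) (hex : ∃ s, ∀ i, imbalance ψ s i = 0) :
    ∃ q : ι → ℝ, (∀ i, imbalance ψ q i = 0) ∧ Tendsto p atTop (𝓝 q) ∧
      ∃ C ρ : ℝ, 0 ≤ ρ ∧ ρ < 1 ∧ ∀ k, ‖p k - q‖ ≤ C * ρ ^ k := by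
  obtain ⟨s, hs⟩ := hex
  have hbdd : ∀ k, ‖p k - s‖ ≤ ‖p 0 - s‖ := fun k => hψ.antitone_norm_sub hp hs (Nat.zero_le k)
  obtain ⟨m, hm0, M, hM0, hmM⟩ := hψ.exists_bounds s ‖p 0 - s‖
  have hM : ∀ k i, rowSum ψ (p k) i ≤ M ∧ colSum ψ (p k) i ≤ M := fun k i =>
    (hmM (p k) (hbdd k) i).2.2
  have hdesc : ∀ k, m / 2 * stepLength ψ (p k) (l k) ^ 2 ≤
      potential ψ (p k) - potential ψ (p (k + 1)) := fun k => by
    rw [hp k]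
    exact hψ.potential_descentStep _ _ (hmM (p k) (hbdd k) _).1 (hmM (p k) (hbdd k) _).2.1
  have hanti : Antitone fun k => potential ψ (p k) := antitone_nat_of_succ_le fun k => by
    have : 0 ≤ m / 2 * stepLength ψ (p k) (l k) ^ 2 := by positivity
    linarith [hdesc k]
  have hwin : ∀ k r, m / 2 * ∑ j ∈ range r, stepLength ψ (p (k + j)) (l (k + j)) ^ 2 ≤
      potential ψ (p k) - potential ψ (p (k + r)) := by
    intro k r
    induction r with
    | zero => simp
    | succ r ih =>
      rw [sum_range_succ, mul_add, ← add_assoc k r 1]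
      linarith [hdesc (k + r)]
  have himb := hψ.abs_imbalance_le_sum_stepLength hp hl hM0.le hM
  have hstep0 : Tendsto (fun k => |stepLength ψ (p k) (l k)|) atTop (𝓝 0) := by
    obtain ⟨v, hv⟩ : ∃ v, Tendsto (fun k => potential ψ (p k)) atTop (𝓝 v) :=
      ⟨_, tendsto_atTop_ciInf hanti ⟨potential ψ s, by
        rintro _ ⟨k, rfl⟩; exact hψ.potential_le hs _⟩⟩
    have hdiff : Tendsto (fun k => 2 / m * (potential ψ (p k) - potential ψ (p (k + 1)))) atTop
        (𝓝 0) := by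
      have := (hv.sub (hv.comp (tendsto_add_atTop_nat 1))).const_mul (2 / m)
      simpa using this
    have hsq : Tendsto (fun k => stepLength ψ (p k) (l k) ^ 2) atTop (𝓝 0) := by
      refine squeeze_zero (fun k => sq_nonneg _) (fun k => ?_) hdiff
      have := hdesc k
      rw [div_mul_eq_mul_div, le_div_iff₀ hm0]
      linarith
    have := hsq.sqrt
    simpa [Real.sqrt_sq_eq_abs] using this
  have himb0 : ∀ i, Tendsto (fun k => imbalance ψ (p k) i) atTop (𝓝 0) := by
    intro i
    refine squeeze_zero_norm (fun k => himb k i) ?_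
    have : Tendsto (fun k => ∑ j ∈ range n, |stepLength ψ (p (k + j)) (l (k + j))|) atTop
        (𝓝 (∑ j ∈ range n, (0 : ℝ))) :=
      tendsto_finsetSum _ fun j _ => hstep0.comp (tendsto_add_atTop_nat j)
    simpa using this.const_mul (4 * M)
  obtain ⟨q, hqmem, φ, hφ, hφq⟩ := (isCompact_closedBall s ‖p 0 - s‖).tendsto_subseq
    (x := p) fun k => by rw [mem_closedBall_iff_norm]; exact hbdd k
  rw [mem_closedBall_iff_norm] at hqmem
  have hφn : Tendsto (fun k => ‖p (φ k) - q‖) atTop (𝓝 0) :=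
    tendsto_iff_norm_sub_tendsto_zero.1 hφq
  have hq : ∀ i, imbalance ψ q i = 0 := by
    intro i
    have h1 : Tendsto (fun k => imbalance ψ (p (φ k)) i) atTop (𝓝 (imbalance ψ q i)) := by
      rw [tendsto_iff_norm_sub_tendsto_zero]
      refine squeeze_zero (fun k => norm_nonneg _) (fun k => hψ.abs_imbalance_sub_le (hM (φ k) i)
        (hmM q hqmem i).2.2) ?_
      simpa using hφn.const_mul (4 * M)
    exact tendsto_nhds_unique h1 ((himb0 i).comp hφ.tendsto_atTop)
  have hlim : Tendsto p atTop (𝓝 q) := by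
    rw [tendsto_iff_norm_sub_tendsto_zero]
    exact (tendsto_iff_tendsto_subseq_of_antitone (hψ.antitone_norm_sub hp hq)
      hφ.tendsto_atTop).2 hφn
  refine ⟨q, hq, hlim, ?_⟩
  obtain ⟨δ, hδ0, B, hB0, hB⟩ := hψ.exists_error_bound hq
  obtain ⟨K, hK⟩ : ∃ K, ∀ k, K ≤ k → ‖p k - q‖ ≤ δ :=
    eventually_atTop.1 ((tendsto_iff_norm_sub_tendsto_zero.1 hlim).eventually_le_const hδ0)
  set a : ℕ → ℝ := fun k => potential ψ (p k) - potential ψ q with ha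
  have ha0 : ∀ k, 0 ≤ a k := fun k => sub_nonneg.2 (hψ.potential_le hq _)
  have haanti : Antitone a := fun i j hij => sub_le_sub_right (hanti hij) _
  set D : ℝ := B * (4 * M) ^ 2 * n * (2 / m) + 1 with hD
  have hD1 : 1 ≤ D := by
    have : 0 ≤ B * (4 * M) ^ 2 * n * (2 / m) := by positivity
    linarith
  have hcontr : ∀ k, K ≤ k → a (k + n) ≤ (D / (D + 1)) * a k := by
    intro k hk
    set W := ∑ j ∈ range n, |stepLength ψ (p (k + j)) (l (k + j))| with hW
    have hW0 : 0 ≤ W := sum_nonneg fun _ _ => abs_nonneg _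
    have h1 : a k ≤ B * (4 * M * W) ^ 2 := hB (p k) _ (by positivity) (hK k hk) (himb k)
    have h2 : W ^ 2 ≤ n * ∑ j ∈ range n, stepLength ψ (p (k + j)) (l (k + j)) ^ 2 := by
      have := sq_sum_le_card_mul_sum_sq (s := range n)
        (f := fun j => |stepLength ψ (p (k + j)) (l (k + j))|)
      simpa using this
    have h3 : ∑ j ∈ range n, stepLength ψ (p (k + j)) (l (k + j)) ^ 2 ≤
        2 / m * (a k - a (k + n)) := by
      rw [div_mul_eq_mul_div, le_div_iff₀ hm0]
      simp only [ha]
      linarith [hwin k n]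
    have h4 : a k ≤ D * (a k - a (k + n)) := by
      calc a k ≤ B * (4 * M * W) ^ 2 := h1
        _ = B * (4 * M) ^ 2 * W ^ 2 := by ring
        _ ≤ B * (4 * M) ^ 2 * (n * (2 / m * (a k - a (k + n)))) := by
          gcongr
          exact h2.trans (by gcongr)
        _ = (D - 1) * (a k - a (k + n)) := by rw [hD]; ring
        _ ≤ D * (a k - a (k + n)) := by
          have : 0 ≤ a k - a (k + n) := sub_nonneg.2 (haanti (Nat.le_add_right k n))
          linarith
    rw [div_mul_eq_mul_div, le_div_iff₀ (by linarith)]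
    linarith [ha0 (k + n), haanti (Nat.le_add_right k n)]
  obtain ⟨C, ρ, hC0, hρ0, hρ1, hgeo⟩ := exists_geometric_bound ha0 haanti hn
    (show 0 < D / (D + 1) by positivity) (by rw [div_lt_one (by linarith)]; linarith) hcontr
  have hr1 : √ρ < 1 := by rw [Real.sqrt_lt' one_pos]; simpa using hρ1
  refine ⟨√(2 / m * C) / (1 - √ρ), √ρ, Real.sqrt_nonneg _, hr1, fun k => ?_⟩
  have hd : ∀ k, dist (p k) (p (k + 1)) ≤ √(2 / m * C) * √ρ ^ k := by
    intro k
    rw [dist_comm, dist_eq_norm, hp, norm_descentStep_sub_self]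
    refine abs_le_of_sq_le_sq ?_ (by positivity)
    rw [mul_pow, ← pow_mul, mul_comm k 2, pow_mul, Real.sq_sqrt hρ0.le,
      Real.sq_sqrt (by positivity), mul_assoc, div_mul_eq_mul_div, le_div_iff₀ hm0]
    have h1 := hgeo k
    have h2 := hψ.potential_le hq (p (k + 1))
    simp only [ha] at h1
    linarith [hdesc k]
  have := dist_le_of_le_geometric_of_tendsto (√ρ) (√(2 / m * C)) hr1 hd hlim k
  rw [dist_eq_norm] at this
  rwa [div_mul_eq_mul_div]

end Convergence

/-- The truncated exponential `t ↦ mid(a eᵗ, u, b)`. -/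
noncomputable def truncExp (a b : ℝ) (u : EReal) (t : ℝ) : ℝ := mid (a * Real.exp t) u b

theorem mid_top (x b : ℝ) : mid x ⊤ b = max x b := by
  rw [mid, min_eq_left le_top, ← EReal.coe_strictMono.monotone.map_max, EReal.toReal_coe]

theorem mid_coe (x u b : ℝ) : mid x u b = max (min x u) b := by
  rw [mid, ← EReal.coe_strictMono.monotone.map_min, ← EReal.coe_strictMono.monotone.map_max, EReal.toReal_coe]

theorem mid_cases (x b : ℝ) (u : EReal) (h : (b : EReal) ≤ u) :
    (u = ⊤ ∧ mid x u b = max x b) ∨ ∃ v : ℝ, u = v ∧ mid x u b = max (min x v) b := by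
  induction u using EReal.rec with
  | bot => simp at h
  | top => exact Or.inl ⟨rfl, mid_top x b⟩
  | coe v => exact Or.inr ⟨v, rfl, mid_coe x v b⟩

theorem le_mid (x b : ℝ) (u : EReal) (h : (b : EReal) ≤ u) : b ≤ mid x u b := by
  rcases mid_cases x b u h with ⟨-, h⟩ | ⟨v, -, h⟩ <;> rw [h] <;> exact le_max_right _ _

theorem mid_mono (b : ℝ) (u : EReal) (h : (b : EReal) ≤ u) : Monotone fun x => mid x u b := by
  intro x y hxy
  induction u using EReal.rec with
  | bot => simp at h
  | top => simp only [mid_top]; exact max_le_max_right b hxy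
  | coe v => simp only [mid_coe]; exact max_le_max_right b (min_le_min_right v hxy)

theorem mid_mul (x b c : ℝ) (u : EReal) (h : (b : EReal) ≤ u) (hc : 0 < c) :
    mid (x * c) (u * (c : EReal)) (b * c) = mid x u b * c := by
  induction u using EReal.rec with
  | bot => simp at h
  | top =>
    rw [EReal.top_mul_coe_of_pos hc, mid_top, mid_top, max_mul_of_nonneg _ _ hc.le]
  | coe v =>
    rw [← EReal.coe_mul, mid_coe, mid_coe, max_mul_of_nonneg _ _ hc.le, min_mul_of_nonneg _ _ hc.le]

theorem mid_mul_le (x b c : ℝ) (u : EReal) (h : (b : EReal) ≤ u) (hb : 0 ≤ b) (hc : 1 ≤ c) :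
    mid (x * c) u b ≤ c * mid x u b := by
  have hc0 : 0 ≤ c := by linarith
  induction u using EReal.rec with
  | bot => simp at h
  | top =>
    rw [mid_top, mid_top, mul_comm c, max_mul_of_nonneg _ _ hc0]
    exact max_le_max le_rfl (by nlinarith)
  | coe v =>
    have hv := EReal.coe_le_coe_iff.1 h
    rw [mid_coe, mid_coe, mul_comm c, max_mul_of_nonneg _ _ hc0, min_mul_of_nonneg _ _ hc0]
    exact max_le_max (min_le_min le_rfl (by nlinarith)) (by nlinarith)

theorem mid_pos {x b : ℝ} {u : EReal} (h : (b : EReal) ≤ u) (hx : 0 < b ∨ (0 < x ∧ 0 < u)) :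
    0 < mid x u b := by
  rcases hx with hb | ⟨hx, hu⟩
  · exact hb.trans_le (le_mid x b u h)
  · rcases mid_cases x b u h with ⟨-, h⟩ | ⟨v, rfl, h⟩ <;> rw [h]
    · exact lt_max_of_lt_left hx
    · exact lt_max_of_lt_left (lt_min hx (EReal.coe_pos.1 hu))

section

variable {a b : ℝ} {u : EReal}

theorem truncExp_mono (ha : 0 ≤ a) (h : (b : EReal) ≤ u) : Monotone (truncExp a b u) :=
  fun _ _ hxy => mid_mono b u h (mul_le_mul_of_nonneg_left (Real.exp_le_exp.2 hxy) ha)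

theorem truncExp_add_le (h : (b : EReal) ≤ u) (hb : 0 ≤ b) (t : ℝ) {s : ℝ} (hs : 0 ≤ s) :
    truncExp a b u (t + s) ≤ Real.exp s * truncExp a b u t := by
  rw [truncExp, truncExp, Real.exp_add, ← mul_assoc]
  exact mid_mul_le _ _ _ u h hb (Real.one_le_exp hs)

theorem mid_eq_of_ge {x : ℝ} (h : (b : EReal) ≤ u) (hx : u ≤ x) : mid x u b = u.toReal := by
  rw [mid, min_eq_right hx, max_eq_left h]

theorem mid_eq_of_le {x : ℝ} (hx : x ≤ b) : mid x u b = b := by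
  rw [mid, max_eq_right ((min_le_left _ _).trans (EReal.coe_le_coe_iff.2 hx)), EReal.toReal_coe]

theorem mid_eq_self {x : ℝ} (hx : b ≤ x) (hxu : (x : EReal) ≤ u) : mid x u b = x := by
  rw [mid, min_eq_left hxu, max_eq_left (EReal.coe_le_coe_iff.2 hx), EReal.toReal_coe]

theorem truncExp_right (ha : 0 ≤ a) (hbu : (b : EReal) ≤ u) (s : ℝ) : ∃ c > 0,
    (∀ t, 0 ≤ t → t ≤ c → truncExp a b u (s + t) = truncExp a b u s) ∨
    (∀ t, 0 ≤ t → t ≤ c → truncExp a b u s + c * t ≤ truncExp a b u (s + t)) := by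
  rcases ha.eq_or_lt with rfl | ha
  · exact ⟨1, one_pos, Or.inl fun t _ _ => by simp [truncExp]⟩
  have hmono : ∀ t, 0 ≤ t → a * Real.exp s ≤ a * Real.exp (s + t) := fun t ht =>
    mul_le_mul_of_nonneg_left (Real.exp_le_exp.2 (by linarith)) ha.le
  have hcont : Tendsto (fun t => a * Real.exp (s + t)) (𝓝[>] 0) (𝓝 (a * Real.exp s)) := by
    have : Continuous fun t => a * Real.exp (s + t) := by fun_prop
    simpa using (this.tendsto 0).mono_left nhdsWithin_le_nhds
  rcases le_or_gt u ((a * Real.exp s : ℝ) : EReal) with hu | hu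
  · refine ⟨1, one_pos, Or.inl fun t ht _ => ?_⟩
    rw [truncExp, truncExp, mid_eq_of_ge hbu hu,
      mid_eq_of_ge hbu (hu.trans (EReal.coe_le_coe_iff.2 (hmono t ht)))]
  rcases lt_or_ge (a * Real.exp s) b with hb | hb
  · obtain ⟨c, hc, hc0⟩ := ((hcont.eventually_le_const hb).and self_mem_nhdsWithin).exists
    refine ⟨c, hc0, Or.inl fun t ht htc => ?_⟩
    have : a * Real.exp (s + t) ≤ b := le_trans
      (mul_le_mul_of_nonneg_left (Real.exp_le_exp.2 (by linarith)) ha.le) hc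
    rw [truncExp, truncExp, mid_eq_of_le hb.le, mid_eq_of_le this]
  · have hcE : Tendsto (fun t => ((a * Real.exp (s + t) : ℝ) : EReal)) (𝓝[>] 0)
        (𝓝 ((a * Real.exp s : ℝ) : EReal)) := (continuous_coe_real_ereal.tendsto _).comp hcont
    have hpos : 0 < a * Real.exp s := by positivity
    obtain ⟨c, ⟨hc, hc2⟩, hc0⟩ := (((hcE.eventually_le_const hu).and
      (Ioc_mem_nhdsGT hpos)).and self_mem_nhdsWithin).exists
    refine ⟨c, hc0, Or.inr fun t ht htc => ?_⟩
    have hle : ((a * Real.exp (s + t) : ℝ) : EReal) ≤ u := le_trans (EReal.coe_le_coe_iff.2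
      (mul_le_mul_of_nonneg_left (Real.exp_le_exp.2 (by linarith)) ha.le)) hc
    rw [truncExp, truncExp, mid_eq_self hb hu.le, mid_eq_self (hb.trans (hmono t ht)) hle,
      Real.exp_add]
    have h1 := mul_le_mul_of_nonneg_left (Real.add_one_le_exp t) hpos.le
    have h2 := mul_le_mul_of_nonneg_right hc2.2 ht
    linarith

theorem truncExp_left (ha : 0 ≤ a) (hbu : (b : EReal) ≤ u) (s : ℝ) : ∃ c > 0,
    (∀ t, 0 ≤ t → t ≤ c → truncExp a b u (s - t) = truncExp a b u s) ∨
    (∀ t, 0 ≤ t → t ≤ c → truncExp a b u (s - t) ≤ truncExp a b u s - c * t) := by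
  rcases ha.eq_or_lt with rfl | ha
  · exact ⟨1, one_pos, Or.inl fun t _ _ => by simp [truncExp]⟩
  have hmono : ∀ {t}, 0 ≤ t → a * Real.exp (s - t) ≤ a * Real.exp s := fun ht =>
    mul_le_mul_of_nonneg_left (Real.exp_le_exp.2 (by linarith)) ha.le
  have hcont : Tendsto (fun t => a * Real.exp (s - t)) (𝓝[>] 0) (𝓝 (a * Real.exp s)) := by
    have : Continuous fun t => a * Real.exp (s - t) := by fun_prop
    simpa using (this.tendsto 0).mono_left nhdsWithin_le_nhds
  rcases le_or_gt (a * Real.exp s) b with hb | hb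
  · refine ⟨1, one_pos, Or.inl fun t ht _ => ?_⟩
    rw [truncExp, truncExp, mid_eq_of_le hb, mid_eq_of_le ((hmono ht).trans hb)]
  rcases lt_or_ge u ((a * Real.exp s : ℝ) : EReal) with hu | hu
  · have hcE : Tendsto (fun t => ((a * Real.exp (s - t) : ℝ) : EReal)) (𝓝[>] 0)
        (𝓝 ((a * Real.exp s : ℝ) : EReal)) := (continuous_coe_real_ereal.tendsto _).comp hcont
    obtain ⟨c, hc, hc0⟩ := ((hcE.eventually_const_le hu).and self_mem_nhdsWithin).exists
    refine ⟨c, hc0, Or.inl fun t ht htc => ?_⟩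
    rw [truncExp, truncExp, mid_eq_of_ge hbu hu.le, mid_eq_of_ge hbu (hc.trans
      (EReal.coe_le_coe_iff.2 (mul_le_mul_of_nonneg_left (Real.exp_le_exp.2 (by linarith)) ha.le)))]
  · obtain ⟨c, ⟨hc, hc2⟩, hc0⟩ := (((hcont.eventually_const_le hb).and
      ((hcont.eventually_const_le (show a * Real.exp s / 2 < a * Real.exp s from
        half_lt_self (by positivity))).and
      (Ioc_mem_nhdsGT (show 0 < a * Real.exp s / 2 by positivity)))).and
      self_mem_nhdsWithin).exists
    refine ⟨c, hc0, Or.inr fun t ht htc => ?_⟩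
    have hle : a * Real.exp (s - c) ≤ a * Real.exp (s - t) :=
      mul_le_mul_of_nonneg_left (Real.exp_le_exp.2 (by linarith)) ha.le
    rw [truncExp, truncExp, mid_eq_self hb.le hu, mid_eq_self (hc.trans hle)
      ((EReal.coe_le_coe_iff.2 (hmono ht)).trans hu)]
    have e : a * Real.exp s = a * Real.exp (s - t) * Real.exp t := by
      rw [mul_assoc, ← Real.exp_add]; ring_nf
    have hpos : 0 < a * Real.exp (s - t) := by positivity
    have h1 := mul_le_mul_of_nonneg_left (Real.add_one_le_exp t) hpos.le
    have h2 : c * t ≤ a * Real.exp (s - t) * t :=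
      mul_le_mul_of_nonneg_right (hc2.2.2.trans (hc2.1.trans hle)) ht
    linarith

end

theorem isScalingFamily_truncExp {n : ℕ} {A L : Matrix (Fin n) (Fin n) ℝ}
    {U : Matrix (Fin n) (Fin n) EReal}
    (hA : ∀ i j, 0 ≤ A i j) (hL : ∀ i j, 0 ≤ L i j) (hLU : ∀ i j, (L i j : EReal) ≤ U i j)
    (hrow : ∀ i, ∃ j, 0 < L i j ∨ (0 < A i j ∧ 0 < U i j))
    (hcol : ∀ j, ∃ i, 0 < L i j ∨ (0 < A i j ∧ 0 < U i j)) :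
    IsScalingFamily fun i j => truncExp (A i j) (L i j) (U i j) where
  nonneg i j _ := (hL i j).trans (le_mid _ _ _ (hLU i j))
  mono i j := truncExp_mono (hA i j) (hLU i j)
  scale i j t _ hh := truncExp_add_le (hLU i j) (hL i j) t hh
  right i j s := truncExp_right (hA i j) (hLU i j) s
  left i j s := truncExp_left (hA i j) (hLU i j) s
  row_pos i := (hrow i).imp fun j hj t => mid_pos (hLU i j)
    (hj.imp id fun h => ⟨mul_pos h.1 (Real.exp_pos t), h.2⟩)
  col_pos j := (hcol j).imp fun i hi t => mid_pos (hLU i j)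
    (hi.imp id fun h => ⟨mul_pos h.1 (Real.exp_pos t), h.2⟩)

theorem isTruncScaling_exp_neg_iff {n : ℕ} (A L : Matrix (Fin n) (Fin n) ℝ)
    (U : Matrix (Fin n) (Fin n) EReal) (p : Fin n → ℝ) :
    IsTruncScaling A L U (fun i => Real.exp (-(p i))) ↔
      ∀ l, imbalance (fun i j => truncExp (A i j) (L i j) (U i j)) p l = 0 := by
  have hinv : (Matrix.diagonal fun i => Real.exp (-(p i)))⁻¹ =
      Matrix.diagonal fun i => Real.exp (p i) := by
    refine Matrix.inv_eq_left_inv ?_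
    rw [Matrix.diagonal_mul_diagonal]
    simp [← Real.exp_add]
  have hentry : ∀ i j, truncation L U ((Matrix.diagonal fun i => Real.exp (-(p i)))⁻¹ * A *
      Matrix.diagonal fun i => Real.exp (-(p i))) i j =
      truncExp (A i j) (L i j) (U i j) (p i - p j) := by
    intro i j
    rw [hinv, truncation, Matrix.of_apply, Matrix.mul_diagonal, Matrix.diagonal_mul, truncExp,
      sub_eq_add_neg, Real.exp_add]
    congr 1
    ring
  simp only [IsTruncScaling, hentry, imbalance, rowSum, colSum, sub_eq_zero, Real.exp_pos,
    implies_true, true_and]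

theorem truncUpdate_eq {n : ℕ} {A L : Matrix (Fin n) (Fin n) ℝ}
    {U : Matrix (Fin n) (Fin n) EReal} (hLU : ∀ i j, (L i j : EReal) ≤ U i j)
    (hψ : IsScalingFamily fun i j => truncExp (A i j) (L i j) (U i j)) (p : Fin n → ℝ)
    (l : Fin n) : truncUpdate A L U p l =
      p l + stepLength (fun i j => truncExp (A i j) (L i j) (U i j)) p l := by
  have hc : ∑ i, mid (A i l * Real.exp (p i)) (U i l * (Real.exp (p l) : EReal))
      (L i l * Real.exp (p l)) =
      colSum (fun i j => truncExp (A i j) (L i j) (U i j)) p l * Real.exp (p l) := by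
    rw [colSum, sum_mul]
    refine sum_congr rfl fun i _ => ?_
    rw [truncExp, ← mid_mul _ _ _ _ (hLU i l) (Real.exp_pos _), mul_assoc, ← Real.exp_add,
      sub_add_cancel]
  have hr : ∑ j, mid (A l j * Real.exp (-(p j))) (U l j * (Real.exp (-(p l)) : EReal))
      (L l j * Real.exp (-(p l))) =
      rowSum (fun i j => truncExp (A i j) (L i j) (U i j)) p l * Real.exp (-(p l)) := by
    rw [rowSum, sum_mul]
    refine sum_congr rfl fun j _ => ?_
    rw [truncExp, ← mid_mul _ _ _ _ (hLU l j) (Real.exp_pos _), mul_assoc, ← Real.exp_add]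
    ring_nf
  rw [truncUpdate, hc, hr, Real.log_mul (hψ.colSum_pos p l).ne' (Real.exp_pos _).ne',
    Real.log_mul (hψ.rowSum_pos p l).ne' (Real.exp_pos _).ne', Real.log_exp, Real.log_exp,
    stepLength]
  ring

theorem exists_lt_add_mod_eq {n a : ℕ} (ha : a < n) (k : ℕ) : ∃ m < n, (k + m) % n = a := by
  refine ⟨(n - k % n + a) % n, Nat.mod_lt _ (by omega), ?_⟩
  have hk := Nat.mod_lt k (show n > 0 by omega)
  have e : k + (n - k % n + a) = a + n * (k / n + 1) := by
    have := Nat.mod_add_div k n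
    rw [mul_add]
    omega
  rw [Nat.add_mod_mod, e, Nat.add_mul_mod_self_left, Nat.mod_eq_of_lt ha]

/-- If `A` has a truncated scaling, then the exact coordinate descent, started anywhere and selecting
the coordinates cyclically (in any fixed order `σ`), converges at least linearly to a vector `p*` such
that `D = diag(e^{-p*})` solves the truncated scaling problem, that is, `T(D⁻¹ A D)` has equal row and
column sums. The hypotheses `hrow`, `hcol` say that the sums under the logarithms are positive. -/
theorem truncScaling_coordinate_descent_converges {n : ℕ} (hn : 0 < n)
    (A L : Matrix (Fin n) (Fin n) ℝ) (U : Matrix (Fin n) (Fin n) EReal)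
    (hA : ∀ i j, 0 ≤ A i j) (hL : ∀ i j, 0 ≤ L i j) (hLU : ∀ i j, (L i j : EReal) ≤ U i j)
    (hrow : ∀ i, ∃ j, 0 < L i j ∨ (0 < A i j ∧ 0 < U i j))
    (hcol : ∀ j, ∃ i, 0 < L i j ∨ (0 < A i j ∧ 0 < U i j))
    (hexists : ∃ d : Fin n → ℝ, IsTruncScaling A L U d)
    (σ : Equiv.Perm (Fin n))
    (p : ℕ → Fin n → ℝ)
    (hstep : ∀ k : ℕ, p (k + 1) =
      Function.update (p k) (σ ⟨k % n, Nat.mod_lt k hn⟩)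
        (truncUpdate A L U (p k) (σ ⟨k % n, Nat.mod_lt k hn⟩))) :
    ∃ pstar : Fin n → ℝ,
      IsTruncScaling A L U (fun i => Real.exp (-(pstar i))) ∧
      Filter.Tendsto p Filter.atTop (nhds pstar) ∧
      ∃ C ρ : ℝ, 0 ≤ ρ ∧ ρ < 1 ∧ ∀ k : ℕ, ‖p k - pstar‖ ≤ C * ρ ^ k := by

  have hψ := isScalingFamily_truncExp hA hL hLU hrow hcol
  have hp : ∀ k, p (k + 1) = descentStep (fun i j => truncExp (A i j) (L i j) (U i j)) (p k)
      (σ ⟨k % n, Nat.mod_lt k hn⟩) := fun k => by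
    rw [hstep, descentStep, truncUpdate_eq hLU hψ]
  have hvisit : ∀ k i, ∃ m < n, σ ⟨(k + m) % n, Nat.mod_lt (k + m) hn⟩ = i := by
    intro k i
    obtain ⟨m, hm, h⟩ := exists_lt_add_mod_eq (σ.symm i).isLt k
    refine ⟨m, hm, ?_⟩
    rw [← σ.apply_symm_apply i]
    exact congrArg σ (Fin.ext h)
  have hex : ∃ s, ∀ i, imbalance (fun i j => truncExp (A i j) (L i j) (U i j)) s i = 0 := by
    obtain ⟨d, hd⟩ := hexists
    refine ⟨fun i => -Real.log (d i), (isTruncScaling_exp_neg_iff A L U _).1 ?_⟩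
    convert hd using 2 with i
    rw [neg_neg, Real.exp_log (hd.1 i)]
  obtain ⟨q, hq, hlim, hrate⟩ := hψ.exists_linear_convergence hp hn hvisit hex
  exact ⟨q, (isTruncScaling_exp_neg_iff A L U q).2 hq, hlim, hrate⟩
end
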